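/- arXiv:1308.2656 — 2 statements merged into one kernel-verified Lean document; each statement's English description precedes it below -/
import Mathlib

section
/- Let n ∈ ℕ, p ∈ (0,1), ε ∈ (0,1), and set r = p/(1 − ε(1−p)) (so that r ∈ (p,1)). Then for every function f : {0,1}^n → ℝ, E_p[f(ω) f(ω^ε)] − E_p[f(ω)]² = Var_r(E_{p/r}[f(ψ·ξ) | ψ]). -/
/-!
Put `q = p / r = 1 - ε * (1 - p)`. Two thinnings `ψ·ξ` and `ψ·ξ'` of the same `ψ ∼ ℙ_r`, with
independent `ξ, ξ' ∼ ℙ_q`, are jointly distributed as `(ω, ω^ε)`: coordinates are independent, and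
in one coordinate both laws have marginal mass `r * q = p` at `1` and mass `r * q ^ 2 = p * q` at
`(1, 1)`. Since `ξ` and `ξ'` are independent given `ψ`, the second moment of `E_q[f(ψ·ξ) | ψ]` is
`E_p[f(ω) f(ω^ε)]`, and its mean is `E_p[f(ω)]`.
-/

open Finset Filter

namespace PartialObs

/-- Weight of a configuration `ω ∈ {0,1}^n` under the product measure `ℙ_p`. -/
noncomputable def w {n : ℕ} (p : ℝ) (ω : Fin n → Bool) : ℝ :=
  ∏ i, if ω i then p else 1 - p

/-- Expectation with respect to `ℙ_p`. -/
noncomputable def E {n : ℕ} (p : ℝ) (f : (Fin n → Bool) → ℝ) : ℝ :=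
  ∑ ω : Fin n → Bool, w p ω * f ω

/-- Variance with respect to `ℙ_p`. -/
noncomputable def Var {n : ℕ} (p : ℝ) (f : (Fin n → Bool) → ℝ) : ℝ :=
  E p (fun ω => (f ω - E p f) ^ 2)

/-- Coordinatewise product `ψ·ξ` of two configurations. -/
def prodCfg {n : ℕ} (ψ ξ : Fin n → Bool) : Fin n → Bool := fun i => ψ i && ξ i

/-- The conditional expectation `E_{p/r}[f(ψ·ξ) | ψ]`, as a function of `ψ`:
`ξ` is integrated out according to `ℙ_{p/r}`. -/
noncomputable def condExp {n : ℕ} (p r : ℝ) (f : (Fin n → Bool) → ℝ)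
    (ψ : Fin n → Bool) : ℝ :=
  E (p / r) (fun ξ => f (prodCfg ψ ξ))

/-- Joint probability mass of the pair `(ω, ω^ε)` at `(a, b)`, where `ω ∼ ℙ_p` and
`ω^ε` is obtained from `ω` by independently resampling each coordinate with
probability `ε` (the resampled value being `1` with probability `p`). -/
noncomputable def pairW {n : ℕ} (p ε : ℝ) (a b : Fin n → Bool) : ℝ :=
  ∏ i, (if a i then p else 1 - p) *
    ((1 - ε) * (if a i = b i then 1 else 0) + ε * (if b i then p else 1 - p))

/-- Expectation `E_p[F(ω, ω^ε)]` over the joint law of `(ω, ω^ε)`. -/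
noncomputable def E2 {n : ℕ} (p ε : ℝ)
    (F : (Fin n → Bool) → (Fin n → Bool) → ℝ) : ℝ :=
  ∑ a : Fin n → Bool, ∑ b : Fin n → Bool, pairW p ε a b * F a b

/-- The quantity `E_p[f(ω) f(ω^ε)] − E_p[f(ω)]²`. -/
noncomputable def noiseCov {n : ℕ} (p ε : ℝ) (f : (Fin n → Bool) → ℝ) : ℝ :=
  E2 p ε (fun a b => f a * f b) - (E p f) ^ 2

/-- Noise sensitivity at intensity `p`: for every `ε ∈ (0,1)`,
`E_p[f_n(ω) f_n(ω^ε)] − E_p[f_n(ω)]² → 0` as `n → ∞`. -/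
def NS (p : ℝ) (f : ∀ n, (Fin n → Bool) → ℝ) : Prop :=
  ∀ ε ∈ Set.Ioo (0 : ℝ) 1,
    Tendsto (fun n => noiseCov p ε (f n)) atTop (nhds 0)

lemma sum_prod_bool {ι R : Type*} [Fintype ι] [DecidableEq ι] [CommSemiring R]
    (g : ι → Bool → R) :
    ∑ ω : ι → Bool, ∏ i, g i (ω i) = ∏ i, (g i true + g i false) := by
  simp only [← Fintype.sum_bool, prod_univ_sum, Fintype.piFinset_univ]

section Moments

variable {n : ℕ} (p : ℝ)

lemma sum_w : ∑ ω : Fin n → Bool, w p ω = 1 := by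
  simpa [w] using sum_prod_bool fun (_ : Fin n) x => if x then p else 1 - p

lemma Var_eq_E_sq_sub_sq_E (g : (Fin n → Bool) → ℝ) :
    Var p g = E p (fun ω => g ω ^ 2) - E p g ^ 2 := by
  set m := E p g with hm
  calc Var p g = ∑ ω, (w p ω * g ω ^ 2 - 2 * m * (w p ω * g ω) + m ^ 2 * w p ω) :=
        sum_congr rfl fun ω _ => by rw [← hm]; ring
    _ = E p (fun ω => g ω ^ 2) - 2 * m * E p g + m ^ 2 * ∑ ω : Fin n → Bool, w p ω := by
        simp only [sum_add_distrib, sum_sub_distrib, ← mul_sum, E]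
    _ = E p (fun ω => g ω ^ 2) - m ^ 2 := by rw [sum_w, ← hm]; ring

end Moments

/-- The thinning kernel: the probability that `ψ·ξ = a` when `ξ ∼ ℙ_q`. -/
noncomputable def thinProb {n : ℕ} (q : ℝ) (ψ a : Fin n → Bool) : ℝ :=
  E q fun ξ => if prodCfg ψ ξ = a then 1 else 0

section Thinning

variable {n : ℕ} (r q : ℝ)

lemma E_comp_prodCfg (f : (Fin n → Bool) → ℝ) (ψ : Fin n → Bool) :
    E q (fun ξ => f (prodCfg ψ ξ)) = ∑ a, thinProb q ψ a * f a := by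
  simp only [thinProb, E, sum_mul]
  rw [sum_comm]
  simp

lemma thinProb_eq_prod (ψ a : Fin n → Bool) :
    thinProb q ψ a =
      ∏ i, if ψ i then (if a i then q else 1 - q) else (if a i then 0 else 1) := by
  have mass_eq_prod (ξ : Fin n → Bool) : w q ξ * (if prodCfg ψ ξ = a then 1 else 0) =
      ∏ i, (if ξ i then q else 1 - q) * (if (ψ i && ξ i) = a i then 1 else 0) := by
    rw [prod_mul_distrib, prod_ite_zero]
    simp [w, prodCfg, funext_iff]
  simp only [thinProb, E, mass_eq_prod]
  rw [sum_prod_bool fun i x =>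
    (if x then q else 1 - q) * (if (ψ i && x) = a i then 1 else 0)]
  refine prod_congr rfl fun i _ => ?_
  cases ψ i <;> cases a i <;> simp

lemma sum_w_mul_thinProb (a : Fin n → Bool) :
    ∑ ψ, w r ψ * thinProb q ψ a = w (r * q) a := by
  simp only [w, thinProb_eq_prod, ← prod_mul_distrib]
  rw [sum_prod_bool fun i x => (if x then r else 1 - r) *
    (if x then (if a i then q else 1 - q) else (if a i then 0 else 1))]
  refine prod_congr rfl fun i _ => ?_
  cases a i <;> simp only [Bool.false_eq_true, ↓reduceIte] <;> ring

lemma E_E_prodCfg (f : (Fin n → Bool) → ℝ) :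
    E r (fun ψ => E q fun ξ => f (prodCfg ψ ξ)) = E (r * q) f := by
  simp only [E_comp_prodCfg]
  simp only [E, ← sum_w_mul_thinProb, mul_sum, sum_mul, mul_assoc]
  exact sum_comm

variable {r q} {ε : ℝ}

lemma sum_w_mul_thinProb_mul_thinProb (hq : q = 1 - ε * (1 - r * q)) (a b : Fin n → Bool) :
    ∑ ψ, w r ψ * (thinProb q ψ a * thinProb q ψ b) = pairW (r * q) ε a b := by
  simp only [w, thinProb_eq_prod, pairW, ← prod_mul_distrib]
  rw [sum_prod_bool fun i x => (if x then r else 1 - r) *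
    ((if x then (if a i then q else 1 - q) else (if a i then 0 else 1)) *
      (if x then (if b i then q else 1 - q) else (if b i then 0 else 1)))]
  refine prod_congr rfl fun i _ => ?_
  have mass_one_one : r * q ^ 2 = r * q * (1 - ε * (1 - r * q)) := by
    rw [← hq]; ring
  cases a i <;> cases b i <;> simp only [Bool.false_eq_true, Bool.true_eq_false, ↓reduceIte]
  · linear_combination mass_one_one
  · linear_combination -mass_one_one
  · linear_combination -mass_one_one
  · linear_combination mass_one_one

lemma E_E_E_prodCfg (hq : q = 1 - ε * (1 - r * q))
    (F : (Fin n → Bool) → (Fin n → Bool) → ℝ) :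
    E r (fun ψ => E q fun ξ => E q fun ξ' => F (prodCfg ψ ξ) (prodCfg ψ ξ')) =
      E2 (r * q) ε F := by
  have average_pair (ψ : Fin n → Bool) :
      E q (fun ξ => E q fun ξ' => F (prodCfg ψ ξ) (prodCfg ψ ξ')) =
        ∑ a, ∑ b, thinProb q ψ a * thinProb q ψ b * F a b := by
    rw [E_comp_prodCfg q (fun a => E q fun ξ' => F a (prodCfg ψ ξ'))]
    simp only [E_comp_prodCfg, mul_sum, mul_assoc]
  simp only [average_pair]
  simp only [E, E2, ← sum_w_mul_thinProb_mul_thinProb hq, mul_sum, sum_mul]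
  rw [sum_comm]
  refine sum_congr rfl fun a _ => ?_
  rw [sum_comm]
  simp only [mul_assoc]

end Thinning

section CondExp

variable {n : ℕ} {p r ε : ℝ} (f : (Fin n → Bool) → ℝ)

lemma E_condExp (hr : r ≠ 0) : E r (condExp p r f) = E p f := by
  calc E r (condExp p r f) = E (r * (p / r)) f := E_E_prodCfg r (p / r) f
    _ = E p f := by rw [mul_div_cancel₀ p hr]

lemma condExp_sq (ψ : Fin n → Bool) :
    condExp p r f ψ ^ 2 =
      E (p / r) fun ξ => E (p / r) fun ξ' => f (prodCfg ψ ξ) * f (prodCfg ψ ξ') := by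
  simp only [condExp, E]
  rw [sq, sum_mul_sum]
  simp only [mul_sum]
  exact sum_congr rfl fun ξ _ => sum_congr rfl fun ξ' _ => by ring

lemma E_condExp_sq (hr : r ≠ 0) (hq : p / r = 1 - ε * (1 - p)) :
    E r (fun ψ => condExp p r f ψ ^ 2) = E2 p ε fun a b => f a * f b := by
  have hrq : r * (p / r) = p := mul_div_cancel₀ p hr
  simp only [condExp_sq]
  rw [E_E_E_prodCfg (ε := ε) (by rw [hrq, hq]) (fun a b => f a * f b), hrq]

end CondExp

theorem noiseCov_eq_two_scale_variance_general {n : ℕ} (p ε : ℝ)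
    (hp : p ≠ 0) (hd : 1 - ε * (1 - p) ≠ 0)
    (r : ℝ) (hr : r = p / (1 - ε * (1 - p)))
    (f : (Fin n → Bool) → ℝ) :
    noiseCov p ε f = Var r (condExp p r f) := by
  have r_ne_zero : r ≠ 0 := hr ▸ div_ne_zero hp hd
  have ratio_eq : p / r = 1 - ε * (1 - p) := by rw [hr, div_div_cancel₀ hp]
  rw [Var_eq_E_sq_sub_sq_E, E_condExp f r_ne_zero, E_condExp_sq f r_ne_zero ratio_eq, noiseCov]

/-- with `r = p/(1 − ε(1−p))`,
`E_p[f(ω) f(ω^ε)] − E_p[f(ω)]² = Var_r(E_{p/r}[f(ψ·ξ) | ψ])`. -/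
theorem noiseCov_eq_two_scale_variance {n : ℕ} (p ε : ℝ)
    (hp : p ∈ Set.Ioo (0 : ℝ) 1) (hε : ε ∈ Set.Ioo (0 : ℝ) 1)
    (r : ℝ) (hr : r = p / (1 - ε * (1 - p)))
    (f : (Fin n → Bool) → ℝ) :
    noiseCov p ε f = Var r (condExp p r f) := by
  have hd : 0 < 1 - ε * (1 - p) := by nlinarith [hp.1, hp.2, hε.1, hε.2]
  exact noiseCov_eq_two_scale_variance_general p ε hp.1.ne' hd.ne' r hr f

end PartialObs
end

section
/- Let n ∈ ℕ and 0 < p < r < 1. For all S, S' ⊆ {1,…,n}, E_r[E_{p/r}[χ_S^p(ψ·ξ) | ψ] · χ_{S'}^r(ψ)] equals ((p/r)·((1−r)/(1−p)))^{|S|/2} if S = S', and equals 0 if S ≠ S'. -/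
/-!
The conditional expectation acts diagonally on characters: it maps `χ_S^p` to `ρ^|S| χ_S^r` with
`ρ = √((p/r)·((1-r)/(1-p)))`, and the characters `χ_S^r` are orthonormal under `ℙ_r`.

Both facts factor over coordinates. On one coordinate, the conditional expectation of `χ_i^p` has
mean zero under `ℙ_r`, because `ψ·ξ` has law `ℙ_p`; a mean-zero function on a two-point space is
determined by its value at `0`, where it agrees with `ρ χ_i^r`.
-/

open Finset Filter

namespace PartialObs

/-- The character `χ_S^p(ω) = ∏_{i ∈ S} χ_i^p(ω)`, where `χ_i^p(ω) = -√((1-p)/p)`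
if `ω_i = 1` and `√(p/(1-p))` if `ω_i = 0`. -/
noncomputable def chi {n : ℕ} (p : ℝ) (S : Finset (Fin n)) (ω : Fin n → Bool) : ℝ :=
  ∏ i ∈ S, if ω i then -Real.sqrt ((1 - p) / p) else Real.sqrt (p / (1 - p))

/-- The Fourier coefficient `f̂^p(S) = E_p[f · χ_S^p]`. -/
noncomputable def fourier {n : ℕ} (p : ℝ) (f : (Fin n → Bool) → ℝ)
    (S : Finset (Fin n)) : ℝ :=
  E p (fun ω => f ω * chi p S ω)

section

variable {n : ℕ} {p r : ℝ}

lemma mul_sqrt_div {a : ℝ} (ha : 0 ≤ a) (b : ℝ) : a * √(b / a) = √(a * b) := by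
  rw [Real.sqrt_div' b ha, mul_div_left_comm, Real.div_sqrt, mul_comm, Real.sqrt_mul ha]

/-- The mean of `g` under the Bernoulli law of parameter `p`, the one-coordinate marginal of `ℙ_p`.
As with `E`, no range is imposed on `p`, so the weights may be signed. -/
def bernoulliMean (p : ℝ) (g : Bool → ℝ) : ℝ :=
  p * g true + (1 - p) * g false

/-- The one-coordinate character `χ_i^p`, as a function of the value of the coordinate. -/
noncomputable def chiCoord (p : ℝ) (x : Bool) : ℝ :=
  if x then -√((1 - p) / p) else √(p / (1 - p))

lemma bernoulliMean_const (p c : ℝ) : bernoulliMean p (fun _ => c) = c := by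
  rw [bernoulliMean]
  ring

lemma bernoulliMean_chiCoord (hp0 : 0 < p) (hp1 : p < 1) : bernoulliMean p (chiCoord p) = 0 := by
  have hone : p * √((1 - p) / p) = √((1 - p) * p) := by
    rw [mul_sqrt_div hp0.le, mul_comm]
  have hzero : (1 - p) * √(p / (1 - p)) = √((1 - p) * p) := mul_sqrt_div (sub_pos.2 hp1).le p
  simp [bernoulliMean, chiCoord, hone, hzero]

lemma bernoulliMean_chiCoord_mul_self (hp0 : 0 < p) (hp1 : p < 1) :
    bernoulliMean p (fun x => chiCoord p x * chiCoord p x) = 1 := by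
  have hq : 0 < 1 - p := sub_pos.2 hp1
  simp only [bernoulliMean, chiCoord, if_true, Bool.false_eq_true, if_false, neg_mul_neg]
  rw [Real.mul_self_sqrt (by positivity), Real.mul_self_sqrt (by positivity)]
  field_simp
  ring

lemma chiCoord_false_eq_sqrt_mul (hp1 : p < 1) (hr0 : 0 < r) (hr1 : r < 1) :
    chiCoord p false = √(p / r * ((1 - r) / (1 - p))) * chiCoord r false := by
  have hq : 0 < 1 - p := sub_pos.2 hp1
  have hs : 0 < 1 - r := sub_pos.2 hr1
  simp only [chiCoord, Bool.false_eq_true, if_false]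
  rw [← Real.sqrt_mul' _ (by positivity)]
  congr 1
  field_simp

lemma bernoulliMean_chiCoord_and (hp0 : 0 < p) (hp1 : p < 1) (hr0 : 0 < r) (hr1 : r < 1)
    (x : Bool) :
    bernoulliMean (p / r) (fun y => chiCoord p (x && y))
      = √(p / r * ((1 - r) / (1 - p))) * chiCoord r x := by
  have hzero := chiCoord_false_eq_sqrt_mul hp1 hr0 hr1
  cases x with
  | false => simpa only [Bool.false_and, bernoulliMean_const] using hzero
  | true =>
    have hp_mean := bernoulliMean_chiCoord hp0 hp1
    have hr_mean := bernoulliMean_chiCoord hr0 hr1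
    simp only [bernoulliMean, Bool.true_and] at hp_mean hr_mean ⊢
    generalize √(p / r * ((1 - r) / (1 - p))) = ρ at hzero ⊢
    field_simp
    linear_combination hp_mean - (1 - r) * hzero - ρ * hr_mean

lemma E_const_mul (p c : ℝ) (f : (Fin n → Bool) → ℝ) :
    E p (fun ω => c * f ω) = c * E p f := by
  simp only [E, mul_sum, mul_left_comm]

lemma E_prod (p : ℝ) (g : Fin n → Bool → ℝ) :
    E p (fun ω => ∏ i, g i (ω i)) = ∏ i, bernoulliMean p (g i) := by
  calc E p (fun ω => ∏ i, g i (ω i))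
      = ∑ ω : Fin n → Bool, ∏ i, (if ω i then p else 1 - p) * g i (ω i) := by
        simp only [E, w, prod_mul_distrib]
    _ = ∏ i, ∑ x : Bool, (if x then p else 1 - p) * g i x := by
        rw [prod_univ_sum, Fintype.piFinset_univ]
    _ = ∏ i, bernoulliMean p (g i) := by simp [bernoulliMean]

lemma E_prod_finset (p : ℝ) (S : Finset (Fin n)) (g : Fin n → Bool → ℝ) :
    E p (fun ω => ∏ i ∈ S, g i (ω i)) = ∏ i ∈ S, bernoulliMean p (g i) := by
  have hcoord (i : Fin n) :
      bernoulliMean p (fun x => if i ∈ S then g i x else 1)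
        = if i ∈ S then bernoulliMean p (g i) else 1 := by
    split_ifs <;> simp only [bernoulliMean_const]
  have h := E_prod p fun i x => if i ∈ S then g i x else 1
  simpa only [hcoord, Fintype.prod_ite_mem] using h

lemma condExp_chi (hp0 : 0 < p) (hp1 : p < 1) (hr0 : 0 < r) (hr1 : r < 1)
    (S : Finset (Fin n)) (ψ : Fin n → Bool) :
    condExp p r (chi p S) ψ = √(p / r * ((1 - r) / (1 - p))) ^ #S * chi r S ψ := by
  calc condExp p r (chi p S) ψ
      = ∏ i ∈ S, bernoulliMean (p / r) (fun y => chiCoord p (ψ i && y)) :=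
        E_prod_finset (p / r) S fun i y => chiCoord p (ψ i && y)
    _ = ∏ i ∈ S, √(p / r * ((1 - r) / (1 - p))) * chiCoord r (ψ i) := by
        simp only [bernoulliMean_chiCoord_and hp0 hp1 hr0 hr1]
    _ = √(p / r * ((1 - r) / (1 - p))) ^ #S * chi r S ψ := by
        rw [prod_mul_distrib, prod_const]
        rfl

lemma chi_eq_prod_univ (p : ℝ) (S : Finset (Fin n)) (ω : Fin n → Bool) :
    chi p S ω = ∏ i, if i ∈ S then chiCoord p (ω i) else 1 := by
  rw [Fintype.prod_ite_mem]
  rfl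

lemma E_chi_mul_chi (hp0 : 0 < p) (hp1 : p < 1) (S T : Finset (Fin n)) :
    E p (fun ω => chi p S ω * chi p T ω) = if S = T then 1 else 0 := by
  have hcoord (i : Fin n) :
      bernoulliMean p (fun x =>
        (if i ∈ S then chiCoord p x else 1) * (if i ∈ T then chiCoord p x else 1))
        = if i ∈ S ↔ i ∈ T then 1 else 0 := by
    by_cases hS : i ∈ S <;> by_cases hT : i ∈ T <;>
      simp [hS, hT, bernoulliMean_const, bernoulliMean_chiCoord hp0 hp1,
        bernoulliMean_chiCoord_mul_self hp0 hp1]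
  simp only [chi_eq_prod_univ, ← prod_mul_distrib]
  rw [E_prod p fun i x =>
    (if i ∈ S then chiCoord p x else 1) * (if i ∈ T then chiCoord p x else 1)]
  simp only [hcoord, prod_ite_zero, prod_const_one, mem_univ, forall_const, Finset.ext_iff]

theorem two_scale_chi_correlation_general (hp0 : 0 < p) (hp1 : p < 1) (hr0 : 0 < r) (hr1 : r < 1)
    (S S' : Finset (Fin n)) :
    E r (fun ψ => condExp p r (chi p S) ψ * chi r S' ψ)
      = if S = S' then (p / r * ((1 - r) / (1 - p))) ^ ((S.card : ℝ) / 2) else 0 := by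
  have hρ : 0 ≤ p / r * ((1 - r) / (1 - p)) :=
    mul_nonneg (div_nonneg hp0.le hr0.le) (div_nonneg (sub_nonneg.2 hr1.le) (sub_nonneg.2 hp1.le))
  calc E r (fun ψ => condExp p r (chi p S) ψ * chi r S' ψ)
      = √(p / r * ((1 - r) / (1 - p))) ^ #S * E r (fun ψ => chi r S ψ * chi r S' ψ) := by
        simp only [condExp_chi hp0 hp1 hr0 hr1, mul_assoc, E_const_mul]
    _ = if S = S' then √(p / r * ((1 - r) / (1 - p))) ^ #S else 0 := by
        rw [E_chi_mul_chi hr0 hr1, mul_ite, mul_one, mul_zero]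
    _ = if S = S' then (p / r * ((1 - r) / (1 - p))) ^ ((S.card : ℝ) / 2) else 0 := by
        rw [Real.rpow_div_two_eq_sqrt _ hρ, Real.rpow_natCast]

end

/-- `E_r[E_{p/r}[χ_S^p(ψ·ξ) | ψ] · χ_{S'}^r(ψ)]` equals
`((p/r)·((1−r)/(1−p)))^{|S|/2}` if `S = S'`, and `0` otherwise. -/
theorem two_scale_chi_correlation {n : ℕ} (p r : ℝ)
    (hp : 0 < p) (hpr : p < r) (hr : r < 1)
    (S S' : Finset (Fin n)) :
    E r (fun ψ => condExp p r (chi p S) ψ * chi r S' ψ)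
      = if S = S' then (p / r * ((1 - r) / (1 - p))) ^ ((S.card : ℝ) / 2)
        else 0 :=
  two_scale_chi_correlation_general hp (hpr.trans hr) (hp.trans hpr) hr S S'

end PartialObs
end
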